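/- Let G be an ample groupoid, M a nondegenerate Z[G]-module with associated G-sheaf M (stalks M_x = colim_{x ∈ U} χ_U M), and Y an étale G-space. The map Ξ : Hom_G(Γ_c(Z[Y]^s), Γ_c(M)) → Hom_G(Z[Y]^s, M), Ξ(φ)([y]) = φ(⟨y⟩_V^s)(p(y)) (for any compact open neighborhood V of y on which p is injective) is a well-defined isomorphism, independent of the choice of V, with inverse Ξ^{-1}(f)(ξ)(x) = f(ξ(x)). In particular Hom_G(Z[Y], M) ≅ Hom_G(Z[Y]^s, M), naturally in Y. -/

import Mathlib

open scoped CompactlySupported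

/-- A topological groupoid with unit space `X` and arrow space `G`.  Composability of a pair
`(g, h)` means `s g = r h`, and multiplication is only defined on composable pairs. -/
structure TopGroupoid (X G : Type*) [TopologicalSpace X] [TopologicalSpace G] where
  s : G → X
  r : G → X
  continuous_s : Continuous s
  continuous_r : Continuous r
  unit : X → G
  continuous_unit : Continuous unit
  embedding_unit : Topology.IsEmbedding unit
  mul : (g h : G) → s g = r h → G
  continuous_mul : Continuous fun p : {p : G × G // s p.1 = r p.2} => mul p.1.1 p.1.2 p.2
  inv : G → G
  continuous_inv : Continuous inv
  s_unit : ∀ x, s (unit x) = x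
  r_unit : ∀ x, r (unit x) = x
  s_mul : ∀ g h hc, s (mul g h hc) = s h
  r_mul : ∀ g h hc, r (mul g h hc) = r g
  unit_mul : ∀ g (hc : s (unit (r g)) = r g), mul (unit (r g)) g hc = g
  mul_unit : ∀ g (hc : s g = r (unit (s g))), mul g (unit (s g)) hc = g
  s_inv : ∀ g, s (inv g) = r g
  r_inv : ∀ g, r (inv g) = s g
  inv_mul : ∀ g (hc : s (inv g) = r g), mul (inv g) g hc = unit (s g)
  mul_inv : ∀ g (hc : s g = r (inv g)), mul g (inv g) hc = unit (r g)
  mul_assoc : ∀ g h k (hgh : s g = r h) (hhk : s h = r k),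
    mul (mul g h hgh) k ((s_mul g h hgh).trans hhk) =
      mul g (mul h k hhk) (hgh.trans (r_mul h k hhk).symm)

namespace TopGroupoid

variable {X G : Type*} [TopologicalSpace X] [TopologicalSpace G]

/-- An étale groupoid: the source and range maps are local homeomorphisms. -/
def IsEtale (Gr : TopGroupoid X G) : Prop :=
  IsLocalHomeomorph Gr.s ∧ IsLocalHomeomorph Gr.r

/-- An ample groupoid: an étale groupoid whose (Hausdorff, locally compact) unit space is
totally disconnected. -/
def IsAmple (Gr : TopGroupoid X G) : Prop :=
  Gr.IsEtale ∧ TotallyDisconnectedSpace X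

/-- The space `G^(n)` of composable strings of `n` arrows, for `n ≥ 1`, topologized as a
subspace of the product `G^n`. -/
def Str (Gr : TopGroupoid X G) (n : ℕ) : Type _ :=
  {g : Fin n → G // ∀ (i : ℕ) (h : i + 1 < n),
    Gr.s (g ⟨i, Nat.lt_of_succ_lt h⟩) = Gr.r (g ⟨i + 1, h⟩)}

instance (Gr : TopGroupoid X G) (n : ℕ) : TopologicalSpace (Gr.Str n) :=
  inferInstanceAs (TopologicalSpace {g : Fin n → G // ∀ (i : ℕ) (h : i + 1 < n),
    Gr.s (g ⟨i, Nat.lt_of_succ_lt h⟩) = Gr.r (g ⟨i + 1, h⟩)})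

/-- `FaceSpec Gr n i F` asserts that `F : G^(n) → G^(n-1)` is the `i`-th face map
`∂_i^n` of the bar construction (`0 ≤ i ≤ n`, `2 ≤ n`): `∂_0` deletes the first arrow, `∂_n`
deletes the last arrow, and `∂_i` for `1 ≤ i ≤ n-1` multiplies the `i`-th and `(i+1)`-st
arrows (in one-based labelling `(g_1, …, g_n)`). -/
def FaceSpec (Gr : TopGroupoid X G) (n i : ℕ) (F : Gr.Str n → Gr.Str (n - 1)) : Prop :=
  ∀ (g : Gr.Str n) (j : Fin (n - 1)),
    (i = 0 → (F g).1 j = g.1 ⟨j.1 + 1, by omega⟩) ∧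
    (1 ≤ i → i ≤ n - 1 →
      ((j.1 + 1 < i → (F g).1 j = g.1 ⟨j.1, by omega⟩) ∧
       (j.1 + 1 = i → (F g).1 j =
          Gr.mul (g.1 ⟨j.1, by omega⟩) (g.1 ⟨j.1 + 1, by omega⟩) (g.2 j.1 (by omega))) ∧
       (i < j.1 + 1 → (F g).1 j = g.1 ⟨j.1 + 1, by omega⟩))) ∧
    (i = n → (F g).1 j = g.1 ⟨j.1, by omega⟩)

end TopGroupoid

namespace TopGroupoid

variable {X G : Type*} [TopologicalSpace X] [TopologicalSpace G]

/-- A (left) action of the topological groupoid `Gr` on a space `Y`, with anchor map `p`. -/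
structure GSpace (Gr : TopGroupoid X G) (Y : Type*) [TopologicalSpace Y] where
  p : Y → X
  continuous_p : Continuous p
  surjective_p : Function.Surjective p
  act : (g : G) → (y : Y) → Gr.s g = p y → Y
  continuous_act :
    Continuous fun q : {q : G × Y // Gr.s q.1 = p q.2} => act q.1.1 q.1.2 q.2
  p_act : ∀ g y h, p (act g y h) = Gr.r g
  act_act : ∀ g₁ g₂ y (h₂ : Gr.s g₂ = p y) (h₁ : Gr.s g₁ = Gr.r g₂),
    act g₁ (act g₂ y h₂) (h₁.trans (p_act g₂ y h₂).symm) =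
      act (Gr.mul g₁ g₂ h₁) y ((Gr.s_mul g₁ g₂ h₁).trans h₂)
  unit_act : ∀ y (h : Gr.s (Gr.unit (p y)) = p y), act (Gr.unit (p y)) y h = y

/-- An étale `G`-space (a `G`-sheaf of sets): the anchor map is a local homeomorphism. -/
def GSpace.IsEtaleSpace {Gr : TopGroupoid X G} {Y : Type*} [TopologicalSpace Y]
    (Sp : Gr.GSpace Y) : Prop :=
  IsLocalHomeomorph Sp.p

/-- `ConvSpec Gr mul` asserts that `mul` is the convolution product on `ℤ[G] = C_c(G, ℤ)`. -/
def ConvSpec (Gr : TopGroupoid X G) (mul : C_c(G, ℤ) → C_c(G, ℤ) → C_c(G, ℤ)) : Prop :=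
  ∀ (f₁ f₂ : C_c(G, ℤ)) (g : G),
    mul f₁ f₂ g = ∑ᶠ h : {h : G // Gr.s h = Gr.r g}, f₁ (Gr.inv h.1) * f₂ (Gr.mul h.1 g h.2)

/-- `SmulSpec Sp smul` asserts that `smul` is the canonical `ℤ[G]`-action on `ℤ[Y] = C_c(Y, ℤ)`
for an étale `G`-space `Y`:  `(f · m)(x) = Σ_{g ∈ G_{p(x)}} f(g⁻¹) m(g · x)`. -/
def GSpace.SmulSpec {Gr : TopGroupoid X G} {Y : Type*} [TopologicalSpace Y]
    (Sp : Gr.GSpace Y) (smul : C_c(G, ℤ) → C_c(Y, ℤ) → C_c(Y, ℤ)) : Prop :=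
  ∀ (f : C_c(G, ℤ)) (m : C_c(Y, ℤ)) (x : Y),
    smul f m x =
      ∑ᶠ g : {g : G // Gr.s g = Sp.p x}, f (Gr.inv g.1) * m (Sp.act g.1 x g.2)

end TopGroupoid

namespace TopGroupoid

open scoped Classical

variable {X G : Type*} [TopologicalSpace X] [TopologicalSpace G]

/-- A compactly supported continuous section of the `G`-sheaf `ℤ[Y]^s` associated to an étale
`G`-space `p : Y → G^(0)`:  the stalk at `x` is the free abelian group `ℤ[Y_x]` on the fiber
`Y_x = p⁻¹(x)` (realized inside `Y →₀ ℤ`), and continuity for the germ topology means that the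
section is locally a finite `ℤ`-linear combination of the basic sections determined by compact
open slices of `Y`. -/
def FreeSection {Y : Type*} [TopologicalSpace Y] {Gr : TopGroupoid X G}
    (Sp : Gr.GSpace Y) (ξ : X → (Y →₀ ℤ)) : Prop :=
  (∀ x, ∀ y ∈ (ξ x).support, Sp.p y = x) ∧
  (∀ x : X, ∃ U : Set X, IsOpen U ∧ x ∈ U ∧
    ∃ (k : ℕ) (V : Fin k → Set Y) (a : Fin k → ℤ) (σ : Fin k → X → Y),
      (∀ i, IsCompact (V i) ∧ IsOpen (V i) ∧ Set.InjOn Sp.p (V i) ∧ U ⊆ Sp.p '' V i) ∧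
      (∀ i, ∀ x' ∈ U, σ i x' ∈ V i ∧ Sp.p (σ i x') = x') ∧
      (∀ x' ∈ U, ξ x' = ∑ i, a i • Finsupp.single (σ i x') 1)) ∧
  (∃ K : Set X, IsCompact K ∧ ∀ x ∉ K, ξ x = 0)

end TopGroupoid

namespace TopGroupoid

variable {X G : Type*} [TopologicalSpace X] [TopologicalSpace G]

/-- A `G`-sheaf (of abelian groups) over the unit space of a topological groupoid `Gr`:
an étale space over `X` with fibers `E x` that are abelian groups with continuous operations,
together with a continuous action of `Gr` by isomorphisms between the stalks. -/
structure GSheaf (Gr : TopGroupoid X G) (E : X → Type*) [∀ x, AddCommGroup (E x)]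
    [TopologicalSpace ((x : X) × E x)] where
  isLocalHomeomorph_fst : IsLocalHomeomorph (fun q : (x : X) × E x => q.1)
  continuous_zero : Continuous fun x : X => (⟨x, 0⟩ : (x : X) × E x)
  continuous_add : ∀ ξ η : ∀ x, E x,
    Continuous (fun x => (⟨x, ξ x⟩ : (x : X) × E x)) →
    Continuous (fun x => (⟨x, η x⟩ : (x : X) × E x)) →
    Continuous (fun x => (⟨x, ξ x + η x⟩ : (x : X) × E x))
  continuous_neg : ∀ ξ : ∀ x, E x,
    Continuous (fun x => (⟨x, ξ x⟩ : (x : X) × E x)) →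
    Continuous (fun x => (⟨x, -ξ x⟩ : (x : X) × E x))
  act : (g : G) → E (Gr.s g) →+ E (Gr.r g)
  continuous_act : Continuous fun q : {q : G × ((x : X) × E x) // q.2.1 = Gr.s q.1} =>
    (⟨Gr.r q.1.1, act q.1.1 (q.2 ▸ q.1.2.2)⟩ : (x : X) × E x)
  act_unit : ∀ (x : X) (v : E (Gr.s (Gr.unit x))),
    act (Gr.unit x) v = ((Gr.s_unit x).trans (Gr.r_unit x).symm) ▸ v
  act_mul : ∀ (g h : G) (hc : Gr.s g = Gr.r h) (v : E (Gr.s h)),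
    (Gr.r_mul g h hc) ▸ act (Gr.mul g h hc) ((Gr.s_mul g h hc).symm ▸ v) =
      act g (hc.symm ▸ act h v)

variable {E : X → Type*} [∀ x, AddCommGroup (E x)] [TopologicalSpace ((x : X) × E x)]
variable {Gr : TopGroupoid X G}

/-- The compactly supported continuous sections of a `G`-sheaf. -/
def GSheaf.GammaC (_Sh : Gr.GSheaf E) : Type _ :=
  {ξ : ∀ x, E x // Continuous (fun x => (⟨x, ξ x⟩ : (x : X) × E x)) ∧
    ∃ K : Set X, IsCompact K ∧ ∀ x ∉ K, ξ x = 0}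

/-- `GammaSmulSpec Sh smul` asserts that `smul` is the canonical `ℤ[G]`-module structure on
the compactly supported sections of the `G`-sheaf `Sh`:
`(f ξ)(x) = Σ_{r(g) = x} f(g) (g · ξ(s(g)))`. -/
def GammaSmulSpec (Sh : Gr.GSheaf E)
    (smul : C_c(G, ℤ) → Sh.GammaC → Sh.GammaC) : Prop :=
  ∀ (f : C_c(G, ℤ)) (ξ : Sh.GammaC) (x : X),
    (smul f ξ).1 x =
      ∑ᶠ g : {g : G // Gr.r g = x}, f g.1 • (g.2 ▸ Sh.act g.1 (ξ.1 (Gr.s g.1)))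

end TopGroupoid

namespace TopGroupoid

variable {X G : Type*} [TopologicalSpace X] [TopologicalSpace G]

/-- `FreeSectionSmulSpec Sp smulF` asserts that `smulF` is the canonical `ℤ[G]`-module
structure on the compactly supported sections of the `G`-sheaf `ℤ[Y]^s`. -/
def FreeSectionSmulSpec {Y : Type*} [TopologicalSpace Y] {Gr : TopGroupoid X G}
    (Sp : Gr.GSpace Y)
    (smulF : C_c(G, ℤ) → {ξ : X → (Y →₀ ℤ) // FreeSection Sp ξ} →
      {ξ : X → (Y →₀ ℤ) // FreeSection Sp ξ}) : Prop :=
  ∀ (f : C_c(G, ℤ)) (ξ : {ξ : X → (Y →₀ ℤ) // FreeSection Sp ξ}) (x : X),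
    (∀ (y : Y) (hy : Sp.p y = x),
      (smulF f ξ).1 x y =
        ∑ᶠ g : {g : G // Gr.r g = x},
          f g.1 * ξ.1 (Gr.s g.1)
            (Sp.act (Gr.inv g.1) y ((Gr.s_inv g.1).trans (g.2.trans hy.symm)))) ∧
    (∀ y : Y, Sp.p y ≠ x → (smulF f ξ).1 x y = 0)

end TopGroupoid

open TopGroupoid
open scoped Classical

namespace TopGroupoid

open Topology Filter

section Topological

variable {X Z : Type*} [TopologicalSpace X] [TopologicalSpace Z]

theorem exists_isCompact_isOpen_subset [T2Space X] [LocallyCompactSpace X]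
    [TotallyDisconnectedSpace X] {x : X} {U : Set X} (hU : U ∈ 𝓝 x) :
    ∃ W ⊆ U, x ∈ W ∧ IsCompact W ∧ IsOpen W := by
  obtain ⟨K, hK, hKU, hKc⟩ := local_compact_nhds hU
  obtain ⟨W, hW, hxW, hWK⟩ :=
    loc_compact_Haus_tot_disc_of_zero_dim.mem_nhds_iff.1 hK
  exact ⟨W, hWK.trans hKU, hxW, hKc.of_isClosed_subset hW.1 hWK, hW.2⟩

theorem exists_compact_open_slice [T2Space X] [LocallyCompactSpace X]
    [TotallyDisconnectedSpace X] {f : Z → X} (hf : IsLocalHomeomorph f) (z : Z) :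
    ∃ V : Set Z, z ∈ V ∧ IsCompact V ∧ IsOpen V ∧ Set.InjOn f V := by
  obtain ⟨e, hz, rfl⟩ := hf z
  obtain ⟨W, hWe, hzW, hWc, hWo⟩ :=
    exists_isCompact_isOpen_subset (e.open_target.mem_nhds (e.map_source hz))
  refine ⟨e.symm '' W, ⟨e z, hzW, e.left_inv hz⟩,
    hWc.image_of_continuousOn (e.continuousOn_symm.mono hWe),
    e.symm.isOpen_image_of_subset_source hWo hWe, e.injOn.mono ?_⟩
  rintro _ ⟨w, hw, rfl⟩
  exact e.map_target (hWe hw)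

/-- The indicator function of a compact open subset of a Hausdorff space. -/
noncomputable def compactOpenIndicator [T2Space Z] (B : Set Z) (hc : IsCompact B)
    (ho : IsOpen B) : C_c(Z, ℤ) where
  toFun := B.indicator 1
  continuous_toFun := IsClopen.continuous_indicator ⟨hc.isClosed, ho⟩ continuous_one
  hasCompactSupport' := HasCompactSupport.intro hc fun _ h => Set.indicator_of_notMem h _

theorem compactOpenIndicator_of_mem [T2Space Z] {B : Set Z} (hc : IsCompact B) (ho : IsOpen B)
    {z : Z} (hz : z ∈ B) : compactOpenIndicator B hc ho z = 1 :=
  Set.indicator_of_mem hz _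

theorem compactOpenIndicator_of_notMem [T2Space Z] {B : Set Z} (hc : IsCompact B)
    (ho : IsOpen B) {z : Z} (hz : z ∉ B) : compactOpenIndicator B hc ho z = 0 :=
  Set.indicator_of_notMem hz _

theorem finite_fiber_support [T1Space X] {f : Z → X} (hf : IsLocalHomeomorph f)
    (a : C_c(Z, ℤ)) (x : X) : {z : {z : Z // f z = x} | a z.1 ≠ 0}.Finite := by
  have hfin : (tsupport a ∩ f ⁻¹' {x}).Finite := by
    refine (a.hasCompactSupport.isCompact.inter_right
      (isClosed_singleton.preimage hf.continuous)).finite ?_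
    refine (hf.isLocalHomeomorphOn.mono (Set.subset_univ _)).isDiscrete_of_image ?_
    refine Set.Subsingleton.isDiscrete (Set.subsingleton_singleton (a := x) |>.anti ?_)
    rintro _ ⟨z, hz, rfl⟩
    exact hz.2
  refine Set.Finite.of_finite_image (f := Subtype.val) (hfin.subset ?_)
    Subtype.val_injective.injOn
  rintro _ ⟨z, hz, rfl⟩
  exact ⟨subset_tsupport _ hz, z.2⟩

end Topological

variable {X G Y : Type*} [TopologicalSpace X] [TopologicalSpace G] [TopologicalSpace Y]
  {Gr : TopGroupoid X G}

theorem IsEtale.isOpenEmbedding_unit (h : Gr.IsEtale) : IsOpenEmbedding Gr.unit := by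
  refine h.1.isOpenEmbedding_of_comp ?_ Gr.continuous_unit
  have : Gr.s ∘ Gr.unit = id := funext Gr.s_unit
  rw [this]
  exact IsOpenEmbedding.id

namespace GSpace

theorem act_congr (Sp : Gr.GSpace Y) {g g' : G} {y : Y} (h : g = g') (hc : Gr.s g = Sp.p y) :
    Sp.act g y hc = Sp.act g' y (h ▸ hc) := by
  subst h; rfl

theorem inv_act_act (Sp : Gr.GSpace Y) (g : G) (y : Y) (hc : Gr.s g = Sp.p y) :
    Sp.act (Gr.inv g) (Sp.act g y hc) ((Gr.s_inv g).trans (Sp.p_act g y hc).symm) = y := by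
  rw [Sp.act_act _ _ _ hc (Gr.s_inv g)]
  have h : Gr.mul (Gr.inv g) g (Gr.s_inv g) = Gr.unit (Sp.p y) := by rw [Gr.inv_mul, hc]
  rw [Sp.act_congr h, Sp.unit_act]

theorem act_inv_act (Sp : Gr.GSpace Y) (g : G) (z : Y) (hz : Gr.s (Gr.inv g) = Sp.p z) :
    Sp.act g (Sp.act (Gr.inv g) z hz) ((Gr.r_inv g).symm.trans (Sp.p_act _ z hz).symm) = z := by
  rw [Sp.act_act _ _ _ hz (Gr.r_inv g).symm]
  have h : Gr.mul g (Gr.inv g) (Gr.r_inv g).symm = Gr.unit (Sp.p z) := by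
    rw [Gr.mul_inv, ← hz, Gr.s_inv]
  rw [Sp.act_congr h, Sp.unit_act]

/-- The action of an arrow on the free abelian group `ℤ[Y]`, killing all points outside of the
fiber over the source. -/
noncomputable def freeAct (Sp : Gr.GSpace Y) (g : G) : (Y →₀ ℤ) →+ (Y →₀ ℤ) :=
  Finsupp.liftAddHom fun y =>
    if h : Gr.s g = Sp.p y then Finsupp.singleAddHom (Sp.act g y h) else 0

theorem freeAct_single (Sp : Gr.GSpace Y) (g : G) (y : Y) (n : ℤ) (h : Gr.s g = Sp.p y) :
    Sp.freeAct g (Finsupp.single y n) = Finsupp.single (Sp.act g y h) n := by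
  simp [freeAct, h]

theorem freeAct_single_of_ne (Sp : Gr.GSpace Y) (g : G) (y : Y) (n : ℤ)
    (h : Gr.s g ≠ Sp.p y) : Sp.freeAct g (Finsupp.single y n) = 0 := by
  simp [freeAct, h]

theorem freeAct_apply (Sp : Gr.GSpace Y) (g : G) (v : Y →₀ ℤ) (z : Y)
    (hz : Gr.s (Gr.inv g) = Sp.p z) :
    Sp.freeAct g v z = v (Sp.act (Gr.inv g) z hz) := by
  induction v using Finsupp.induction_linear with
  | zero => simp
  | add u w hu hw => simp [hu, hw]
  | single y n =>
    by_cases h : Gr.s g = Sp.p y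
    · rw [Sp.freeAct_single g y n h]
      by_cases hy : Sp.act g y h = z
      · subst hy
        rw [Sp.inv_act_act]
        simp
      · rw [Finsupp.single_eq_of_ne' hy, Finsupp.single_eq_of_ne']
        rintro rfl
        exact hy (Sp.act_inv_act g z hz)
    · rw [Sp.freeAct_single_of_ne g y n h, Finsupp.single_eq_of_ne']
      · rfl
      · rintro rfl
        exact h (by rw [Sp.p_act, Gr.r_inv])

theorem freeAct_apply_of_ne (Sp : Gr.GSpace Y) (g : G) (v : Y →₀ ℤ) (z : Y)
    (hz : Sp.p z ≠ Gr.r g) : Sp.freeAct g v z = 0 := by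
  induction v using Finsupp.induction_linear with
  | zero => simp
  | add u w hu hw => simp [hu, hw]
  | single y n =>
    by_cases h : Gr.s g = Sp.p y
    · rw [Sp.freeAct_single g y n h, Finsupp.single_eq_of_ne']
      rintro rfl
      exact hz (Sp.p_act g y h)
    · rw [Sp.freeAct_single_of_ne g y n h]
      rfl

/-- The compactly supported continuous sections of `ℤ[Y]^s`, as an additive subgroup. -/
def freeSections (Sp : Gr.GSpace Y) : AddSubgroup (X → (Y →₀ ℤ)) where
  carrier := {ξ | FreeSection Sp ξ}
  zero_mem' := by
    refine ⟨by simp, fun x => ⟨Set.univ, isOpen_univ, trivial, 0, Fin.elim0, Fin.elim0,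
      Fin.elim0, fun i => i.elim0, fun i => i.elim0, by simp⟩, ∅, isCompact_empty, by simp⟩
  add_mem' := by
    rintro ξ η ⟨hξ₁, hξ₂, K, hK, hξK⟩ ⟨hη₁, hη₂, L, hL, hηL⟩
    refine ⟨fun x y hy => ?_, fun x => ?_, K ∪ L, hK.union hL, fun x hx => ?_⟩
    · rcases Finset.mem_union.1 (Finsupp.support_add hy) with h | h
      exacts [hξ₁ x y h, hη₁ x y h]
    · obtain ⟨U, hU, hxU, k, V, a, σ, hV, hσ, hs⟩ := hξ₂ x
      obtain ⟨U', hU', hxU', k', V', a', σ', hV', hσ', hs'⟩ := hη₂ x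
      refine ⟨U ∩ U', hU.inter hU', ⟨hxU, hxU'⟩, k + k', Fin.append V V', Fin.append a a',
        Fin.append σ σ', fun i => ?_, fun i x' hx' => ?_, fun x' hx' => ?_⟩
      · refine Fin.addCases (fun i => ?_) (fun i => ?_) i
        · simpa using ⟨(hV i).1, (hV i).2.1, (hV i).2.2.1,
            Set.inter_subset_left.trans (hV i).2.2.2⟩
        · simpa using ⟨(hV' i).1, (hV' i).2.1, (hV' i).2.2.1,
            Set.inter_subset_right.trans (hV' i).2.2.2⟩
      · refine Fin.addCases (fun i => ?_) (fun i => ?_) i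
        · simpa using hσ i x' hx'.1
        · simpa using hσ' i x' hx'.2
      · simp only [Pi.add_apply, hs x' hx'.1, hs' x' hx'.2, Fin.sum_univ_add,
          Fin.append_left, Fin.append_right]
    · simp [hξK x fun h => hx (.inl h), hηL x fun h => hx (.inr h)]
  neg_mem' := by
    rintro ξ ⟨hξ₁, hξ₂, K, hK, hξK⟩
    refine ⟨fun x y hy => hξ₁ x y (by simpa using hy), fun x => ?_, K, hK,
      fun x hx => by simp [hξK x hx]⟩
    obtain ⟨U, hU, hxU, k, V, a, σ, hV, hσ, hs⟩ := hξ₂ x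
    refine ⟨U, hU, hxU, k, V, -a, σ, hV, hσ, fun x' hx' => ?_⟩
    rw [Pi.neg_apply, hs x' hx', ← Finset.sum_neg_distrib]
    simp only [Pi.neg_apply, neg_smul]

/-- The basic section `x ↦ [z]`, where `z ∈ V` lies over `x`. -/
noncomputable def sliceFun (Sp : Gr.GSpace Y) (V : Set Y) (x : X) : Y →₀ ℤ :=
  if h : ∃ y ∈ V, Sp.p y = x then Finsupp.single h.choose 1 else 0

theorem sliceFun_of_mem (Sp : Gr.GSpace Y) {V : Set Y} (hV : Set.InjOn Sp.p V) {y : Y}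
    (hy : y ∈ V) : Sp.sliceFun V (Sp.p y) = Finsupp.single y 1 := by
  have h : ∃ z ∈ V, Sp.p z = Sp.p y := ⟨y, hy, rfl⟩
  rw [sliceFun, dif_pos h, hV h.choose_spec.1 hy h.choose_spec.2]

theorem sliceFun_of_notMem (Sp : Gr.GSpace Y) {V : Set Y} {x : X} (hx : x ∉ Sp.p '' V) :
    Sp.sliceFun V x = 0 :=
  dif_neg hx

theorem sliceFun_apply (Sp : Gr.GSpace Y) {V : Set Y} (hV : Set.InjOn Sp.p V) (x : X) (y : Y) :
    Sp.sliceFun V x y = if y ∈ V ∧ Sp.p y = x then 1 else 0 := by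
  by_cases hx : x ∈ Sp.p '' V
  · obtain ⟨z, hz, rfl⟩ := hx
    rw [Sp.sliceFun_of_mem hV hz, Finsupp.single_apply]
    refine if_congr ⟨?_, fun h => hV hz h.1 h.2.symm⟩ rfl rfl
    rintro rfl
    exact ⟨hz, rfl⟩
  · rw [Sp.sliceFun_of_notMem hx, if_neg]
    · rfl
    · rintro ⟨hy, rfl⟩
      exact hx ⟨y, hy, rfl⟩

theorem freeSection_sliceFun [T2Space X] (Sp : Gr.GSpace Y) (hSp : Sp.IsEtaleSpace) {V : Set Y}
    (hc : IsCompact V) (ho : IsOpen V) (hV : Set.InjOn Sp.p V) :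
    FreeSection Sp (Sp.sliceFun V) := by
  have hcV : IsCompact (Sp.p '' V) := hc.image Sp.continuous_p
  refine ⟨fun x y hy => ?_, fun x => ?_, Sp.p '' V, hcV, fun x hx => Sp.sliceFun_of_notMem hx⟩
  · rw [Finsupp.mem_support_iff, Sp.sliceFun_apply hV] at hy
    by_contra h
    exact hy (if_neg fun h' => h h'.2)
  · by_cases hx : x ∈ Sp.p '' V
    · have : Nonempty Y := ⟨hx.choose⟩
      refine ⟨Sp.p '' V, hSp.isOpenMap V ho, hx, 1, fun _ => V, fun _ => 1,
        fun _ => Function.invFunOn Sp.p V, fun _ => ⟨hc, ho, hV, subset_rfl⟩,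
        fun _ x' hx' => ⟨Function.invFunOn_mem hx', Function.invFunOn_eq hx'⟩, ?_⟩
      rintro _ ⟨y, hy, rfl⟩
      simp [Sp.sliceFun_of_mem hV hy, hV.leftInvOn_invFunOn hy]
    · exact ⟨(Sp.p '' V)ᶜ, hcV.isClosed.isOpen_compl, hx, 0, Fin.elim0, Fin.elim0,
        Fin.elim0, fun i => i.elim0, fun i => i.elim0, fun x' hx' => by
          simp [Sp.sliceFun_of_notMem hx']⟩

/-- The basic section attached to a compact open slice, as an element of the group of
compactly supported sections. -/
noncomputable def sliceSection [T2Space X] (Sp : Gr.GSpace Y) (hSp : Sp.IsEtaleSpace)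
    (V : {V : Set Y // IsCompact V ∧ IsOpen V ∧ Set.InjOn Sp.p V}) : Sp.freeSections :=
  ⟨Sp.sliceFun V.1, Sp.freeSection_sliceFun hSp V.2.1 V.2.2.1 V.2.2.2⟩

/-- Every section of `ℤ[Y]^s` is locally a combination of basic sections. -/
theorem exists_eventuallyEq_sum_sliceSection [T2Space X] (Sp : Gr.GSpace Y)
    (hSp : Sp.IsEtaleSpace) (ξ : Sp.freeSections) (x : X) :
    ∃ (k : ℕ) (V : Fin k → {V : Set Y // IsCompact V ∧ IsOpen V ∧ Set.InjOn Sp.p V})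
      (a : Fin k → ℤ),
      ξ.1 =ᶠ[𝓝 x] (∑ i, a i • Sp.sliceSection hSp (V i) : Sp.freeSections).1 := by
  obtain ⟨U, hU, hxU, k, V, a, σ, hV, hσ, hs⟩ := ξ.2.2.1 x
  refine ⟨k, fun i => ⟨V i, (hV i).1, (hV i).2.1, (hV i).2.2.1⟩, a, ?_⟩
  filter_upwards [hU.mem_nhds hxU] with x' hx'
  rw [hs x' hx', AddSubgroup.val_finsetSum, Finset.sum_apply]
  refine Finset.sum_congr rfl fun i _ => ?_
  have := Sp.sliceFun_of_mem (hV i).2.2.1 (hσ i x' hx').1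
  rw [(hσ i x' hx').2] at this
  simp [sliceSection, this]

theorem smul_eq_sum_freeAct [T1Space X] (Sp : Gr.GSpace Y) (hr : IsLocalHomeomorph Gr.r)
    {smulF : C_c(G, ℤ) → {ξ : X → (Y →₀ ℤ) // FreeSection Sp ξ} →
      {ξ : X → (Y →₀ ℤ) // FreeSection Sp ξ}}
    (hsmulF : FreeSectionSmulSpec Sp smulF) (f : C_c(G, ℤ))
    (ξ : {ξ : X → (Y →₀ ℤ) // FreeSection Sp ξ}) (x : X) :
    (smulF f ξ).1 x =
      ∑ g ∈ (finite_fiber_support hr f x).toFinset,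
        f g.1 • Sp.freeAct g.1 (ξ.1 (Gr.s g.1)) := by
  ext y
  rw [Finsupp.finsetSum_apply]
  by_cases hy : Sp.p y = x
  · rw [(hsmulF f ξ x).1 y hy, finsum_eq_sum_of_support_subset]
    · refine Finset.sum_congr rfl fun g _ => ?_
      rw [Finsupp.smul_apply, smul_eq_mul, Sp.freeAct_apply]
    · intro g hg
      simpa using left_ne_zero_of_mul hg
  · rw [(hsmulF f ξ x).2 y hy]
    refine (Finset.sum_eq_zero fun g _ => ?_).symm
    rw [Finsupp.smul_apply, Sp.freeAct_apply_of_ne, smul_zero]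
    rwa [g.2]

theorem smul_indicator_apply [T2Space X] [T2Space G] (Sp : Gr.GSpace Y)
    {smulF : C_c(G, ℤ) → {ξ : X → (Y →₀ ℤ) // FreeSection Sp ξ} →
      {ξ : X → (Y →₀ ℤ) // FreeSection Sp ξ}}
    (hr : IsLocalHomeomorph Gr.r) (hsmulF : FreeSectionSmulSpec Sp smulF) {B : Set G}
    (hc : IsCompact B) (ho : IsOpen B) (hB : Set.InjOn Gr.r B) {g : G} (hg : g ∈ B)
    (ξ : {ξ : X → (Y →₀ ℤ) // FreeSection Sp ξ}) :
    (smulF (compactOpenIndicator B hc ho) ξ).1 (Gr.r g) = Sp.freeAct g (ξ.1 (Gr.s g)) := by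
  rw [Sp.smul_eq_sum_freeAct hr hsmulF, Finset.sum_eq_single ⟨g, rfl⟩]
  · rw [compactOpenIndicator_of_mem hc ho hg, one_smul]
  · intro g' _ hne
    rw [compactOpenIndicator_of_notMem, zero_smul]
    exact fun h => hne (Subtype.ext (hB h hg g'.2))
  · simp [compactOpenIndicator_of_mem hc ho hg]

theorem smul_indicator_congr [T2Space X] [T2Space G] (Sp : Gr.GSpace Y)
    {smulF : C_c(G, ℤ) → {ξ : X → (Y →₀ ℤ) // FreeSection Sp ξ} →
      {ξ : X → (Y →₀ ℤ) // FreeSection Sp ξ}}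
    (hr : IsLocalHomeomorph Gr.r) (hsmulF : FreeSectionSmulSpec Sp smulF) {B : Set G}
    (hc : IsCompact B) (ho : IsOpen B) {ξ η : {ξ : X → (Y →₀ ℤ) // FreeSection Sp ξ}}
    (h : ∀ g ∈ B, ξ.1 (Gr.s g) = η.1 (Gr.s g)) :
    smulF (compactOpenIndicator B hc ho) ξ = smulF (compactOpenIndicator B hc ho) η := by
  ext1
  funext x
  rw [Sp.smul_eq_sum_freeAct hr hsmulF, Sp.smul_eq_sum_freeAct hr hsmulF]
  refine Finset.sum_congr rfl fun g _ => ?_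
  by_cases hg : g.1 ∈ B
  · rw [h _ hg]
  · rw [compactOpenIndicator_of_notMem hc ho hg, zero_smul, zero_smul]

end GSpace

variable {E : X → Type*} [∀ x, AddCommGroup (E x)]

/-- The additive extension to `ℤ[Y]` of a family `F y ∈ E (p y)`, at the stalk over `x`. -/
noncomputable def GSpace.extend (Sp : Gr.GSpace Y) (F : (y : Y) → E (Sp.p y)) (x : X) :
    (Y →₀ ℤ) →+ E x :=
  Finsupp.liftAddHom fun y =>
    if h : Sp.p y = x then zmultiplesHom (E x) (h ▸ F y) else 0

namespace GSpace

theorem extend_single (Sp : Gr.GSpace Y) (F : (y : Y) → E (Sp.p y)) {x : X} {y : Y} (n : ℤ)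
    (h : Sp.p y = x) : Sp.extend F x (Finsupp.single y n) = n • (h ▸ F y : E x) := by
  simp [extend, h]

theorem extend_single_self (Sp : Gr.GSpace Y) (F : (y : Y) → E (Sp.p y)) (y : Y) :
    Sp.extend F (Sp.p y) (Finsupp.single y 1) = F y := by
  rw [Sp.extend_single F 1 rfl, one_smul]

theorem extend_single_of_ne (Sp : Gr.GSpace Y) (F : (y : Y) → E (Sp.p y)) {x : X} {y : Y}
    (n : ℤ) (h : Sp.p y ≠ x) : Sp.extend F x (Finsupp.single y n) = 0 := by
  simp [extend, h]

theorem extend_eq_finsum (Sp : Gr.GSpace Y) (F : (y : Y) → E (Sp.p y)) (x : X) (v : Y →₀ ℤ) :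
    Sp.extend F x v = ∑ᶠ y : {y : Y // Sp.p y = x}, v y.1 • (y.2 ▸ F y.1 : E x) := by
  have hfin (v : Y →₀ ℤ) : (Function.support fun y : {y : Y // Sp.p y = x} =>
      v y.1 • (y.2 ▸ F y.1 : E x)).Finite := by
    refine Set.Finite.of_finite_image (f := Subtype.val)
      (v.support.finite_toSet.subset ?_) Subtype.val_injective.injOn
    rintro _ ⟨y, hy, rfl⟩
    simpa using left_ne_zero_of_smul hy
  induction v using Finsupp.induction_linear with
  | zero => simp
  | add u w hu hw =>
    rw [map_add, hu, hw, ← finsum_add_distrib (hfin u) (hfin w)]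
    simp only [Finsupp.add_apply, add_smul]
  | single y n =>
    by_cases h : Sp.p y = x
    · rw [Sp.extend_single F n h, finsum_eq_single _ ⟨y, h⟩]
      · simp
      · intro z hz
        rw [Finsupp.single_eq_of_ne, zero_smul]
        exact fun h' => hz (Subtype.ext h')
    · rw [Sp.extend_single_of_ne F n h]
      refine (finsum_eq_zero_of_forall_eq_zero fun z => ?_).symm
      rw [Finsupp.single_eq_of_ne, zero_smul]
      rintro rfl
      exact h z.2

end GSpace

variable [TopologicalSpace ((x : X) × E x)]

namespace GSheaf

/-- The continuous global sections of a `G`-sheaf, as an additive subgroup. -/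
def continuousSections (Sh : Gr.GSheaf E) : AddSubgroup (∀ x, E x) where
  carrier := {ξ | Continuous fun x => (⟨x, ξ x⟩ : (x : X) × E x)}
  zero_mem' := Sh.continuous_zero
  add_mem' := Sh.continuous_add _ _
  neg_mem' := Sh.continuous_neg _

theorem act_unit_injective (Sh : Gr.GSheaf E) (x : X) :
    Function.Injective (Sh.act (Gr.unit x)) := by
  have cast_injective {a b : X} (h : a = b) (v w : E a)
      (hvw : (h ▸ v : E b) = h ▸ w) : v = w := by
    subst h; exact hvw
  intro v w h
  rw [Sh.act_unit, Sh.act_unit] at h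
  exact cast_injective _ v w h

theorem smul_indicator_apply [T2Space G] (Sh : Gr.GSheaf E)
    {smulM : C_c(G, ℤ) → Sh.GammaC → Sh.GammaC} (hsmulM : GammaSmulSpec Sh smulM) {B : Set G}
    (hc : IsCompact B) (ho : IsOpen B) (hB : Set.InjOn Gr.r B) {g : G} (hg : g ∈ B)
    (η : Sh.GammaC) :
    (smulM (compactOpenIndicator B hc ho) η).1 (Gr.r g) = Sh.act g (η.1 (Gr.s g)) := by
  rw [hsmulM, finsum_eq_single _ ⟨g, rfl⟩]
  · rw [compactOpenIndicator_of_mem hc ho hg, one_smul]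
  · intro g' hne
    rw [compactOpenIndicator_of_notMem, zero_smul]
    exact fun h => hne (Subtype.ext (hB h hg g'.2))

theorem extend_freeAct (Sh : Gr.GSheaf E) (Sp : Gr.GSpace Y) (F : (y : Y) → E (Sp.p y))
    (hF : ∀ (g : G) (y : Y) (hc : Gr.s g = Sp.p y),
      (Sp.p_act g y hc) ▸ F (Sp.act g y hc) = Sh.act g (hc.symm ▸ F y))
    (g : G) (v : Y →₀ ℤ) :
    Sp.extend F (Gr.r g) (Sp.freeAct g v) = Sh.act g (Sp.extend F (Gr.s g) v) := by
  induction v using Finsupp.induction_linear with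
  | zero => simp
  | add u w hu hw => simp [hu, hw]
  | single y n =>
    by_cases h : Gr.s g = Sp.p y
    · rw [Sp.freeAct_single g y n h, Sp.extend_single F n (Sp.p_act g y h),
        Sp.extend_single F n h.symm, map_zsmul, hF g y h]
    · rw [Sp.freeAct_single_of_ne g y n h, Sp.extend_single_of_ne F n (Ne.symm h), map_zero,
        map_zero]

theorem continuous_extend_sliceFun [T2Space X] (Sh : Gr.GSheaf E) (Sp : Gr.GSpace Y)
    (hSp : Sp.IsEtaleSpace) {F : (y : Y) → E (Sp.p y)}
    (hF : Continuous fun y => (⟨Sp.p y, F y⟩ : (x : X) × E x)) {V : Set Y}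
    (hc : IsCompact V) (ho : IsOpen V) (hV : Set.InjOn Sp.p V) :
    Continuous fun x => (⟨x, Sp.extend F x (Sp.sliceFun V x)⟩ : (x : X) × E x) := by
  refine continuous_iff_continuousAt.2 fun x => ?_
  by_cases hx : x ∈ Sp.p '' V
  · obtain ⟨y, hy, rfl⟩ := hx
    have key : ∀ z ∈ V, Sp.extend F (Sp.p z) (Sp.sliceFun V (Sp.p z)) = F z := fun z hz => by
      rw [Sp.sliceFun_of_mem hV hz, Sp.extend_single_self]
    rw [ContinuousAt, ← hSp.map_nhds_eq y, tendsto_map'_iff, key y hy]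
    refine hF.continuousAt.tendsto.congr' ?_
    filter_upwards [ho.mem_nhds hy] with z hz
    simp only [Function.comp_apply, key z hz]
  · refine Sh.continuous_zero.continuousAt.congr ?_
    have hcl : IsClosed (Sp.p '' V) := (hc.image Sp.continuous_p).isClosed
    filter_upwards [hcl.isOpen_compl.mem_nhds hx] with z hz
    rw [Sp.sliceFun_of_notMem hz, map_zero]

theorem continuous_extend [T2Space X] (Sh : Gr.GSheaf E) (Sp : Gr.GSpace Y)
    (hSp : Sp.IsEtaleSpace) {F : (y : Y) → E (Sp.p y)}
    (hF : Continuous fun y => (⟨Sp.p y, F y⟩ : (x : X) × E x)) (ξ : Sp.freeSections) :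
    Continuous fun x => (⟨x, Sp.extend F x (ξ.1 x)⟩ : (x : X) × E x) := by
  refine continuous_iff_continuousAt.2 fun x => ?_
  obtain ⟨k, V, a, h⟩ := Sp.exists_eventuallyEq_sum_sliceSection hSp ξ x
  have hmem : (∑ i, a i • fun x => Sp.extend F x (Sp.sliceFun (V i).1 x)) ∈
      Sh.continuousSections :=
    sum_mem fun i _ => zsmul_mem (Sh.continuous_extend_sliceFun Sp hSp hF
      (V i).2.1 (V i).2.2.1 (V i).2.2.2) _
  refine (Continuous.continuousAt hmem).congr ?_
  filter_upwards [h] with x' hx'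
  simp [hx', GSpace.sliceSection]

/-- The map on compactly supported sections induced by a morphism of sheaves `ℤ[Y]^s → 𝓜`. -/
noncomputable def extendGamma [T2Space X] (Sh : Gr.GSheaf E) (Sp : Gr.GSpace Y)
    (hSp : Sp.IsEtaleSpace) {F : (y : Y) → E (Sp.p y)}
    (hF : Continuous fun y => (⟨Sp.p y, F y⟩ : (x : X) × E x))
    (ξ : {ξ : X → (Y →₀ ℤ) // FreeSection Sp ξ}) : Sh.GammaC :=
  ⟨fun x => Sp.extend F x (ξ.1 x), Sh.continuous_extend Sp hSp hF ξ, by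
    obtain ⟨K, hK, h⟩ := ξ.2.2.2
    exact ⟨K, hK, fun x hx => by simp only [h x hx, map_zero]⟩⟩

theorem extendGamma_smul [T2Space X] (Sh : Gr.GSheaf E) (Sp : Gr.GSpace Y)
    (hr : IsLocalHomeomorph Gr.r) (hSp : Sp.IsEtaleSpace) {F : (y : Y) → E (Sp.p y)}
    (hF : Continuous fun y => (⟨Sp.p y, F y⟩ : (x : X) × E x))
    (hF' : ∀ (g : G) (y : Y) (hc : Gr.s g = Sp.p y),
      (Sp.p_act g y hc) ▸ F (Sp.act g y hc) = Sh.act g (hc.symm ▸ F y))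
    {smulF : C_c(G, ℤ) → {ξ : X → (Y →₀ ℤ) // FreeSection Sp ξ} →
      {ξ : X → (Y →₀ ℤ) // FreeSection Sp ξ}}
    (hsmulF : FreeSectionSmulSpec Sp smulF)
    {smulM : C_c(G, ℤ) → Sh.GammaC → Sh.GammaC} (hsmulM : GammaSmulSpec Sh smulM)
    (f : C_c(G, ℤ)) (ξ : {ξ : X → (Y →₀ ℤ) // FreeSection Sp ξ}) :
    Sh.extendGamma Sp hSp hF (smulF f ξ) = smulM f (Sh.extendGamma Sp hSp hF ξ) := by
  refine Subtype.ext (funext fun x => ?_)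
  rw [hsmulM, finsum_eq_sum_of_support_subset (s := (finite_fiber_support hr f x).toFinset)]
  · change Sp.extend F x _ = _
    rw [Sp.smul_eq_sum_freeAct hr hsmulF, map_sum]
    refine Finset.sum_congr rfl fun g _ => ?_
    obtain ⟨g, rfl⟩ := g
    rw [map_zsmul, Sh.extend_freeAct Sp F hF']
    rfl
  · intro g hg
    simpa using left_ne_zero_of_smul hg

end GSheaf

/-- The condition that `T` is a homomorphism of `ℤ[G]`-modules `Γ_c(ℤ[Y]^s) → Γ_c(𝓜)`. -/
def IsModuleHom (Sp : Gr.GSpace Y) (Sh : Gr.GSheaf E)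
    (smulF : C_c(G, ℤ) → {ξ : X → (Y →₀ ℤ) // FreeSection Sp ξ} →
      {ξ : X → (Y →₀ ℤ) // FreeSection Sp ξ})
    (smulM : C_c(G, ℤ) → Sh.GammaC → Sh.GammaC)
    (T : {ξ : X → (Y →₀ ℤ) // FreeSection Sp ξ} → Sh.GammaC) : Prop :=
  (∀ ξ η ζ, (∀ x, ζ.1 x = ξ.1 x + η.1 x) → ∀ x, (T ζ).1 x = (T ξ).1 x + (T η).1 x) ∧
  (∀ f ξ, T (smulF f ξ) = smulM f (T ξ))

namespace IsModuleHom

variable {Sp : Gr.GSpace Y} {Sh : Gr.GSheaf E}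
  {smulF : C_c(G, ℤ) → {ξ : X → (Y →₀ ℤ) // FreeSection Sp ξ} →
    {ξ : X → (Y →₀ ℤ) // FreeSection Sp ξ}}
  {smulM : C_c(G, ℤ) → Sh.GammaC → Sh.GammaC}
  {T : {ξ : X → (Y →₀ ℤ) // FreeSection Sp ξ} → Sh.GammaC}

/-- Evaluation of a module homomorphism at the stalk over `x`. -/
noncomputable def evalHom (hT : IsModuleHom Sp Sh smulF smulM T) (x : X) : Sp.freeSections →+ E x :=
  AddMonoidHom.mk' (fun ξ => (T ξ).1 x) fun ξ η => hT.1 ξ η (ξ + η) (fun _ => rfl) x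

/-- The germ of `T ξ` at `x` only depends on the germ of `ξ` at `x`. -/
theorem apply_congr [T2Space X] [LocallyCompactSpace X] [T2Space G] (hGr : Gr.IsAmple)
    (hsmulF : FreeSectionSmulSpec Sp smulF) (hsmulM : GammaSmulSpec Sh smulM)
    (hT : IsModuleHom Sp Sh smulF smulM T)
    {ξ η : {ξ : X → (Y →₀ ℤ) // FreeSection Sp ξ}} {x : X} (h : ξ.1 =ᶠ[𝓝 x] η.1) :
    (T ξ).1 x = (T η).1 x := by
  have := hGr.2
  obtain ⟨U, hU, hxU, hUc, hUo⟩ := exists_isCompact_isOpen_subset h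
  have hBc : IsCompact (Gr.unit '' U) := hUc.image Gr.continuous_unit
  have hBo : IsOpen (Gr.unit '' U) := hGr.1.isOpenEmbedding_unit.isOpenMap U hUo
  have hB : Set.InjOn Gr.r (Gr.unit '' U) := by
    rintro _ ⟨a, -, rfl⟩ _ ⟨b, -, rfl⟩ hab
    rw [Gr.r_unit, Gr.r_unit] at hab
    rw [hab]
  have hmem : Gr.unit x ∈ Gr.unit '' U := ⟨x, hxU, rfl⟩
  have heq := Sp.smul_indicator_congr hGr.1.2 hsmulF hBc hBo (ξ := ξ) (η := η) <| by
    rintro _ ⟨u, hu, rfl⟩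
    rw [Gr.s_unit]
    exact hU hu
  have hval := congrArg (fun ζ => (T ζ).1 (Gr.r (Gr.unit x))) heq
  simp only [hT.2, Sh.smul_indicator_apply hsmulM hBc hBo hB hmem] at hval
  have := Sh.act_unit_injective x hval
  rwa [Gr.s_unit] at this

/-- A module homomorphism which takes the values `F` on basic sections is given by the additive
extension of `F`. -/
theorem apply_eq_extend [T2Space X] [LocallyCompactSpace X] [T2Space G] (hGr : Gr.IsAmple)
    (hSp : Sp.IsEtaleSpace)
    (hsmulF : FreeSectionSmulSpec Sp smulF) (hsmulM : GammaSmulSpec Sh smulM)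
    (hT : IsModuleHom Sp Sh smulF smulM T) {F : (y : Y) → E (Sp.p y)}
    (hF : ∀ (V : {V : Set Y // IsCompact V ∧ IsOpen V ∧ Set.InjOn Sp.p V}), ∀ y ∈ V.1,
      (T (Sp.sliceSection hSp V)).1 (Sp.p y) = F y)
    (ξ : {ξ : X → (Y →₀ ℤ) // FreeSection Sp ξ}) (x : X) :
    (T ξ).1 x = Sp.extend F x (ξ.1 x) := by
  have hslice (V) : hT.evalHom x (Sp.sliceSection hSp V) =
      Sp.extend F x ((Sp.sliceSection hSp V).1 x) := by
    by_cases hx : x ∈ Sp.p '' V.1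
    · obtain ⟨y, hy, rfl⟩ := hx
      refine (hF V y hy).trans ?_
      change _ = Sp.extend F _ (Sp.sliceFun V.1 _)
      rw [Sp.sliceFun_of_mem V.2.2.2 hy, Sp.extend_single_self]
    · have hzero : (Sp.sliceSection hSp V).1 =ᶠ[𝓝 x] (0 : Sp.freeSections).1 := by
        have hcl : IsClosed (Sp.p '' V.1) := (V.2.1.image Sp.continuous_p).isClosed
        filter_upwards [hcl.isOpen_compl.mem_nhds hx] with z hz
        exact Sp.sliceFun_of_notMem hz
      refine (hT.apply_congr hGr hsmulF hsmulM hzero).trans ?_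
      rw [hzero.self_of_nhds]
      exact (map_zero (hT.evalHom x)).trans (map_zero (Sp.extend F x)).symm
  obtain ⟨k, V, a, h⟩ := Sp.exists_eventuallyEq_sum_sliceSection hSp ξ x
  refine (hT.apply_congr hGr hsmulF hsmulM h).trans ?_
  rw [h.self_of_nhds]
  change hT.evalHom x _ = _
  rw [map_sum, AddSubgroup.val_finsetSum, Finset.sum_apply, map_sum]
  refine Finset.sum_congr rfl fun i _ => ?_
  rw [map_zsmul, hslice]
  exact (map_zsmul (Sp.extend F x) _ _).symm

/-- The value of `T` on a basic section does not depend on the slice. -/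
theorem apply_sliceSection_eq [T2Space X] [LocallyCompactSpace X] [T2Space G]
    (hGr : Gr.IsAmple) (hSp : Sp.IsEtaleSpace)
    (hsmulF : FreeSectionSmulSpec Sp smulF) (hsmulM : GammaSmulSpec Sh smulM)
    (hT : IsModuleHom Sp Sh smulF smulM T)
    (V W : {V : Set Y // IsCompact V ∧ IsOpen V ∧ Set.InjOn Sp.p V}) {y : Y}
    (hV : y ∈ V.1) (hW : y ∈ W.1) :
    (T (Sp.sliceSection hSp V)).1 (Sp.p y) = (T (Sp.sliceSection hSp W)).1 (Sp.p y) := by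
  refine hT.apply_congr hGr hsmulF hsmulM ?_
  rw [← hSp.map_nhds_eq y]
  refine eventually_map.2 ?_
  filter_upwards [V.2.2.1.mem_nhds hV, W.2.2.1.mem_nhds hW] with z hzV hzW
  exact (Sp.sliceFun_of_mem V.2.2.2 hzV).trans (Sp.sliceFun_of_mem W.2.2.2 hzW).symm

/-- A family of values of `T` on basic sections is a morphism of `G`-sheaves. -/
theorem continuous_and_equivariant [T2Space X] [LocallyCompactSpace X] [T2Space G]
    (hGr : Gr.IsAmple) (hSp : Sp.IsEtaleSpace)
    (hsmulF : FreeSectionSmulSpec Sp smulF) (hsmulM : GammaSmulSpec Sh smulM)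
    (hT : IsModuleHom Sp Sh smulF smulM T) {F : (y : Y) → E (Sp.p y)}
    (hF : ∀ (V : {V : Set Y // IsCompact V ∧ IsOpen V ∧ Set.InjOn Sp.p V}), ∀ y ∈ V.1,
      (T (Sp.sliceSection hSp V)).1 (Sp.p y) = F y) :
    Continuous (fun y => (⟨Sp.p y, F y⟩ : (x : X) × E x)) ∧
      ∀ (g : G) (y : Y) (hc : Gr.s g = Sp.p y),
        (Sp.p_act g y hc) ▸ F (Sp.act g y hc) = Sh.act g (hc.symm ▸ F y) := by
  have := hGr.2
  constructor
  · refine continuous_iff_continuousAt.2 fun y => ?_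
    obtain ⟨V, hy, hV⟩ := exists_compact_open_slice hSp y
    have hcont := (T (Sp.sliceSection hSp ⟨V, hV⟩)).2.1.comp Sp.continuous_p
    refine hcont.continuousAt.congr ?_
    filter_upwards [hV.2.1.mem_nhds hy] with z hz
    simp only [Function.comp_apply, hF ⟨V, hV⟩ z hz]
  · intro g y hc
    obtain ⟨V, hy, hV⟩ := exists_compact_open_slice hSp y
    obtain ⟨B, hg, hBc, hBo, hB⟩ := exists_compact_open_slice hGr.1.2 g
    obtain ⟨ζ, hs⟩ : ∃ ζ : {ξ : X → (Y →₀ ℤ) // FreeSection Sp ξ},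
        ζ.1 (Gr.s g) = Finsupp.single y 1 :=
      ⟨Sp.sliceSection hSp ⟨V, hV⟩, hc ▸ Sp.sliceFun_of_mem hV.2.2 hy⟩
    have hval := congrArg (fun η : Sh.GammaC => η.1 (Gr.r g))
      (hT.2 (compactOpenIndicator B hBc hBo) ζ)
    simp only [Sh.smul_indicator_apply hsmulM hBc hBo hB hg,
      hT.apply_eq_extend hGr hSp hsmulF hsmulM hF,
      Sp.smul_indicator_apply hGr.1.2 hsmulF hBc hBo hB hg, hs] at hval
    rw [Sp.freeAct_single g y 1 hc, Sp.extend_single F 1 (Sp.p_act g y hc),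
      Sp.extend_single F 1 hc.symm, one_smul, one_smul] at hval
    exact hval

end IsModuleHom

end TopGroupoid

/-- (Proposition `lem:hom_isom`.)  Let `G` be an ample groupoid, `M` a
nondegenerate `ℤ[G]`-module identified (via Steinberg's equivalence) with the compactly
supported sections `Γ_c(𝓜)` of its associated `G`-sheaf `𝓜`, and `Y` an étale `G`-space.  The
map `Ξ : Hom_G(Γ_c(ℤ[Y]^s), Γ_c(𝓜)) → Hom_G(ℤ[Y]^s, 𝓜)`,
`Ξ(φ)([y]) = φ(⟨y⟩_V^s)(p(y))` (for any compact open slice `V ∋ y`), is a well-defined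
isomorphism, independent of the choice of `V`, with inverse `Ξ⁻¹(f)(ξ)(x) = f(ξ(x))`. -/
theorem statement8 {X G Y : Type*} [TopologicalSpace X] [TopologicalSpace G]
    [TopologicalSpace Y] [T2Space X] [LocallyCompactSpace X]
    [T2Space G] [LocallyCompactSpace G] [T2Space Y] [LocallyCompactSpace Y]
    {E : X → Type*} [∀ x, AddCommGroup (E x)] [TopologicalSpace ((x : X) × E x)]
    (Gr : TopGroupoid X G) (hGr : Gr.IsAmple)
    (Sp : Gr.GSpace Y) (hSp : Sp.IsEtaleSpace)
    (Sh : Gr.GSheaf E)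
    -- the `ℤ[G]`-module structure on `Γ_c(ℤ[Y]^s)`
    (smulF : C_c(G, ℤ) → {ξ : X → (Y →₀ ℤ) // FreeSection Sp ξ} →
      {ξ : X → (Y →₀ ℤ) // FreeSection Sp ξ})
    (hsmulF : FreeSectionSmulSpec Sp smulF)
    -- the `ℤ[G]`-module structure on `M = Γ_c(𝓜)`
    (smulM : C_c(G, ℤ) → Sh.GammaC → Sh.GammaC) (hsmulM : GammaSmulSpec Sh smulM) :
    ∃ Ξ : {T : {ξ : X → (Y →₀ ℤ) // FreeSection Sp ξ} → Sh.GammaC //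
            (∀ ξ η ζ, (∀ x, ζ.1 x = ξ.1 x + η.1 x) →
              ∀ x, (T ζ).1 x = (T ξ).1 x + (T η).1 x) ∧
            (∀ f ξ, T (smulF f ξ) = smulM f (T ξ))} →
          {F : (y : Y) → E (Sp.p y) //
            Continuous (fun y => (⟨Sp.p y, F y⟩ : (x : X) × E x)) ∧
            ∀ (g : G) (y : Y) (hc : Gr.s g = Sp.p y),
              (Sp.p_act g y hc) ▸ F (Sp.act g y hc) = Sh.act g (hc.symm ▸ F y)},
      -- the defining formula `Ξ(φ)([y]) = φ(⟨y⟩_V^s)(p(y))`, for every choice of slice `V`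
      (∀ φ (y : Y) (V : Set Y), y ∈ V → IsCompact V → IsOpen V → Set.InjOn Sp.p V →
        ∀ ξV : {ξ : X → (Y →₀ ℤ) // FreeSection Sp ξ},
          (∀ (x : X) (y' : Y), ξV.1 x y' = if y' ∈ V ∧ Sp.p y' = x then 1 else 0) →
          (Ξ φ).1 y = (φ.1 ξV).1 (Sp.p y)) ∧
      Function.Bijective Ξ ∧
      -- `Ξ` is additive
      (∀ φ₁ φ₂ φ₃, (∀ ξ x, (φ₃.1 ξ).1 x = (φ₁.1 ξ).1 x + (φ₂.1 ξ).1 x) →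
        ∀ y : Y, (Ξ φ₃).1 y = (Ξ φ₁).1 y + (Ξ φ₂).1 y) ∧
      -- the inverse is `Ξ⁻¹(f)(ξ)(x) = f(ξ(x))`
      (∀ φ Fm, Ξ φ = Fm ↔
        ∀ (ξ : {ξ : X → (Y →₀ ℤ) // FreeSection Sp ξ}) (x : X),
          (φ.1 ξ).1 x = ∑ᶠ y : {y : Y // Sp.p y = x}, ξ.1 x y.1 • (y.2 ▸ Fm.1 y.1)) := by
  have := hGr.2
  choose V hyV hV using exists_compact_open_slice (f := Sp.p) hSp
  let ev (T : {ξ : X → (Y →₀ ℤ) // FreeSection Sp ξ} → Sh.GammaC) (y : Y) : E (Sp.p y) :=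
    (T (Sp.sliceSection hSp ⟨V y, hV y⟩)).1 (Sp.p y)
  have hev {T} (hT : IsModuleHom Sp Sh smulF smulM T) (W) (y) (hy : y ∈ W.1) :
      (T (Sp.sliceSection hSp W)).1 (Sp.p y) = ev T y :=
    hT.apply_sliceSection_eq hGr hSp hsmulF hsmulM W ⟨V y, hV y⟩ hy (hyV y)
  refine ⟨fun φ => ⟨ev φ.1, IsModuleHom.continuous_and_equivariant (T := φ.1) hGr hSp hsmulF
    hsmulM φ.2 (hev φ.2)⟩, ?_, ?_⟩
  · intro φ y W hy hc ho hW ξ hξ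
    have : ξ = Sp.sliceSection hSp ⟨W, hc, ho, hW⟩ :=
      Subtype.ext <| funext fun x => Finsupp.ext fun y' =>
        (hξ x y').trans (Sp.sliceFun_apply hW x y').symm
    rw [this]
    exact (hev φ.2 ⟨W, hc, ho, hW⟩ y hy).symm
  have hext (φ : {T // IsModuleHom Sp Sh smulF smulM T}) (ξ x) :
      (φ.1 ξ).1 x = Sp.extend (ev φ.1) x (ξ.1 x) :=
    φ.2.apply_eq_extend hGr hSp hsmulF hsmulM (hev φ.2) ξ x
  have hslice (F : (y : Y) → E (Sp.p y)) (y : Y) :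
      Sp.extend F (Sp.p y) ((Sp.sliceSection hSp ⟨V y, hV y⟩).1 (Sp.p y)) = F y := by
    refine (congrArg _ (Sp.sliceFun_of_mem (hV y).2.2 (hyV y))).trans ?_
    exact Sp.extend_single_self F y
  refine ⟨⟨fun φ ψ h => ?_, fun F => ?_⟩, fun φ₁ φ₂ φ₃ h y => h _ _, fun φ F => ⟨?_, ?_⟩⟩
  · have h' : ev φ.1 = ev ψ.1 := congrArg Subtype.val h
    refine Subtype.ext (funext fun ξ => Subtype.ext (funext fun x => ?_))
    rw [hext φ, hext ψ, h']
  · refine ⟨⟨Sh.extendGamma Sp hSp F.2.1, fun ξ η ζ h x => ?_,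
      Sh.extendGamma_smul Sp hGr.1.2 hSp F.2.1 F.2.2 hsmulF hsmulM⟩, ?_⟩
    · exact (congrArg _ (h x)).trans (map_add (Sp.extend F.1 x) _ _)
    · exact Subtype.ext (funext fun y => hslice F.1 y)
  · rintro rfl ξ x
    rw [← Sp.extend_eq_finsum]
    exact hext φ ξ x
  · intro h
    refine Subtype.ext (funext fun y => (h _ _).trans ?_)
    rw [← Sp.extend_eq_finsum]
    exact hslice F.1 y
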